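/- Let x ∈ ℤ_{≥0}^n be a nondecreasing position (x_1 ≤ ⋯ ≤ x_n) of Nim^=_{n,k} with x_{n−k+1} ≥ 1 (so its k largest piles are all nonempty), and let x' be obtained from x by removing exactly one token from each of the k largest piles: x'_i = x_i for i ≤ n−k and x'_i = x_i − 1 for i > n−k. Then T_{n,k}(x') = T_{n,k}(x) − 1. -/

import Mathlib

/-- A move in Exact k-Nim `Nim^=_{n,k}`: all piles weakly decrease and
exactly `k` piles strictly decrease. -/
def ExactMove (n k : ℕ) (x x' : Fin n → ℕ) : Prop :=
  (∀ i, x' i ≤ x i) ∧ (Finset.univ.filter fun i => x' i < x i).card = k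

/-- There is a chain of `m` consecutive moves starting at `x`. -/
def HasChain (n k : ℕ) (x : Fin n → ℕ) (m : ℕ) : Prop :=
  ∃ f : Fin (m + 1) → Fin n → ℕ, f 0 = x ∧
    ∀ i : Fin m, ExactMove n k (f i.castSucc) (f i.succ)

/-- The Tetris function `T_{n,k}(x)`: the maximum number of consecutive moves
that can be made starting from `x`. -/
noncomputable def tetris (n k : ℕ) (x : Fin n → ℕ) : ℕ :=
  sSup {m | HasChain n k x m}

/-!
In `m` moves, pile `i` takes part at most `min (x i) m` times, so `k * m ≤ ∑ i, min (x i) m`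
whenever `m` moves are possible. Conversely, suppose this inequality holds for `m + 1`, and take one
token from each of `k` largest piles. Either some other pile exceeds `m`, and then the chosen piles
still have at least `m` tokens each; or all other piles are at most `m`, and then the sum loses
exactly `k`. In both cases the inequality holds for `m` in the new position. By induction the
inequality characterises the possible numbers of moves, and the same step shows that a chain of
`m + 1` moves can always be replaced by one that starts with the slow move on the largest piles.
-/

section LargestPiles

variable {ι : Type*}

/-- `S` consists of indices of largest values of `x`; ties between `S` and its complement are
allowed, so that a set of `k` largest piles exists for every `k` but need not be unique. -/
def IsTopSet {α : Type*} [LE α] (x : ι → α) (S : Finset ι) : Prop :=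
  ∀ i ∈ S, ∀ j ∉ S, x j ≤ x i

/-- The position reached from `x` by removing one token from each pile in `S`. Empty piles of `S`
stay empty, so this is a move on `S` only if all these piles are nonempty. -/
def slowMove [DecidableEq ι] (S : Finset ι) (x : ι → ℕ) : ι → ℕ :=
  fun i => if i ∈ S then x i - 1 else x i

/-- The sum of the pile sizes, each capped at `m`: an upper bound for the total number of times the
piles can be touched in `m` moves. -/
def cappedSum [Fintype ι] (x : ι → ℕ) (m : ℕ) : ℕ :=
  ∑ i, min (x i) m

theorem exists_isTopSet_card_eq [Fintype ι] {α : Type*} [LinearOrder α] (x : ι → α) {k : ℕ}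
    (hk : k ≤ Fintype.card ι) : ∃ S : Finset ι, S.card = k ∧ IsTopSet x S := by
  classical
  induction k with
  | zero => exact ⟨∅, Finset.card_empty, by simp [IsTopSet]⟩
  | succ k ih =>
    obtain ⟨S, hcard, htop⟩ := ih (Nat.le_of_succ_le hk)
    have hne : Sᶜ.Nonempty := by
      rw [← Finset.card_pos, Finset.card_compl]
      omega
    obtain ⟨e, he, hmax⟩ := Finset.exists_max_image Sᶜ x hne
    refine ⟨insert e S, ?_, fun i hi j hj => ?_⟩
    · rw [Finset.card_insert_of_notMem (Finset.mem_compl.1 he), hcard]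
    · have hjS : j ∉ S := fun h => hj (Finset.mem_insert_of_mem h)
      rcases Finset.mem_insert.1 hi with rfl | hiS
      · exact hmax j (Finset.mem_compl.2 hjS)
      · exact htop i hiS j hjS

theorem isTopSet_Ici_of_monotone [LinearOrder ι] [LocallyFiniteOrderTop ι] {α : Type*} [Preorder α]
    {x : ι → α} (hx : Monotone x) (a : ι) : IsTopSet x (Finset.Ici a) := by
  intro i hi j hj
  rw [Finset.mem_Ici] at hi hj
  exact hx ((not_le.1 hj).le.trans hi)

theorem slowMove_Ici {n : ℕ} (a : Fin n) (x : Fin n → ℕ) :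
    slowMove (Finset.Ici a) x = fun i : Fin n => if (i : ℕ) < a then x i else x i - 1 := by
  funext i
  simp only [slowMove, Finset.mem_Ici, ← not_lt, ite_not, Fin.lt_def]

theorem cappedSum_le_sum [Fintype ι] (x : ι → ℕ) (m : ℕ) : cappedSum x m ≤ ∑ i, x i :=
  Finset.sum_le_sum fun _ _ => min_le_left _ _

variable [Fintype ι] {x : ι → ℕ} {S : Finset ι} {m : ℕ}

theorem card_mul_le_cappedSum (hx : ∀ i ∈ S, m ≤ x i) : S.card * m ≤ cappedSum x m :=
  calc S.card * m = ∑ i ∈ S, min (x i) m := by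
        rw [Finset.sum_congr rfl fun i hi => min_eq_right (hx i hi), Finset.sum_const, smul_eq_mul]
    _ ≤ cappedSum x m := Finset.sum_le_sum_of_subset (Finset.subset_univ S)

theorem cappedSum_le_card_mul (hx : ∀ i ∉ S, x i = 0) : cappedSum x m ≤ S.card * m :=
  calc cappedSum x m = ∑ i ∈ S, min (x i) m :=
        (Finset.sum_subset (Finset.subset_univ S) fun i _ hi => by rw [hx i hi, Nat.zero_min]).symm
    _ ≤ S.card * m := Finset.sum_le_card_nsmul S _ m fun _ _ => min_le_right _ _

theorem IsTopSet.pos_of_card_mul_le_cappedSum (hS : IsTopSet x S) (hm : 0 < m)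
    (h : S.card * m ≤ cappedSum x m) : ∀ i ∈ S, 0 < x i := by
  classical
  intro i hi
  by_contra hxi
  have hzero : ∀ j ∉ S.erase i, x j = 0 := by
    intro j hj
    by_cases hji : j = i
    · rw [hji]
      omega
    · have := hS i hi j fun hjS => hj (Finset.mem_erase.2 ⟨hji, hjS⟩)
      omega
  have hle : S.card * m ≤ (S.erase i).card * m := h.trans (cappedSum_le_card_mul hzero)
  exact (Finset.card_erase_lt_of_mem hi).not_ge (Nat.le_of_mul_le_mul_right hle hm)

variable [DecidableEq ι]

theorem cappedSum_succ_eq_cappedSum_slowMove_add_card (hpos : ∀ i ∈ S, 0 < x i)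
    (hcap : ∀ i ∉ S, x i ≤ m) : cappedSum x (m + 1) = cappedSum (slowMove S x) m + S.card := by
  have hpile : ∀ i, min (x i) (m + 1) = min (slowMove S x i) m + if i ∈ S then 1 else 0 := by
    intro i
    by_cases hi : i ∈ S
    · have := hpos i hi
      simp only [slowMove, if_pos hi]
      omega
    · have := hcap i hi
      simp only [slowMove, if_neg hi]
      omega
  simp only [cappedSum, hpile, Finset.sum_add_distrib, Finset.sum_boole, Finset.filter_univ_mem,
    Nat.cast_id]

theorem IsTopSet.card_mul_le_cappedSum_slowMove (hS : IsTopSet x S) (hpos : ∀ i ∈ S, 0 < x i)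
    (h : S.card * (m + 1) ≤ cappedSum x (m + 1)) :
    S.card * m ≤ cappedSum (slowMove S x) m := by
  by_cases hcap : ∀ j ∉ S, x j ≤ m
  · rw [cappedSum_succ_eq_cappedSum_slowMove_add_card hpos hcap, Nat.mul_succ] at h
    exact Nat.le_of_add_le_add_right h
  · push Not at hcap
    obtain ⟨j, hj, hmj⟩ := hcap
    refine card_mul_le_cappedSum fun i hi => ?_
    rw [slowMove, if_pos hi]
    exact Nat.le_sub_one_of_lt (hmj.trans_le (hS i hi j hj))

end LargestPiles

section Chains

variable {n k m : ℕ} {x y : Fin n → ℕ} {S : Finset (Fin n)}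

theorem exactMove_slowMove (hpos : ∀ i ∈ S, 0 < x i) : ExactMove n S.card x (slowMove S x) := by
  have hlt : ∀ i, slowMove S x i < x i ↔ i ∈ S := by
    intro i
    by_cases hi : i ∈ S
    · simp [slowMove, hi, hpos i hi]
    · simp [slowMove, hi]
  refine ⟨fun i => ?_, by simp only [hlt, Finset.filter_univ_mem]⟩
  unfold slowMove
  split_ifs
  exacts [Nat.sub_le _ _, le_rfl]

theorem ExactMove.cappedSum_add_le (hxy : ExactMove n k x y) (m : ℕ) :
    cappedSum y m + k ≤ cappedSum x (m + 1) := by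
  obtain ⟨hle, hcard⟩ := hxy
  have hpile : ∀ i, min (y i) m + (if y i < x i then 1 else 0) ≤ min (x i) (m + 1) := by
    intro i
    have := hle i
    split_ifs <;> omega
  calc cappedSum y m + k = ∑ i, (min (y i) m + if y i < x i then 1 else 0) := by
        rw [Finset.sum_add_distrib, ← Finset.card_filter, hcard, cappedSum]
    _ ≤ cappedSum x (m + 1) := Finset.sum_le_sum fun i _ => hpile i

theorem hasChain_zero (n k : ℕ) (x : Fin n → ℕ) : HasChain n k x 0 :=
  ⟨fun _ => x, rfl, fun i => i.elim0⟩

theorem hasChain_succ_iff :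
    HasChain n k x (m + 1) ↔ ∃ y, ExactMove n k x y ∧ HasChain n k y m := by
  constructor
  · rintro ⟨f, rfl, hf⟩
    exact ⟨f 1, hf 0, fun i => f i.succ, rfl, fun i => hf i.succ⟩
  · rintro ⟨_, hxy, f, rfl, hf⟩
    exact ⟨Fin.cons x f, rfl, Fin.cases hxy hf⟩

theorem HasChain.mul_le_cappedSum (h : HasChain n k x m) : k * m ≤ cappedSum x m := by
  induction m generalizing x with
  | zero => exact Nat.zero_le _
  | succ m ih =>
    obtain ⟨y, hxy, hy⟩ := hasChain_succ_iff.1 h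
    exact (Nat.add_le_add_right (ih hy) k).trans (hxy.cappedSum_add_le m)

theorem hasChain_of_mul_le_cappedSum (hk : k ≤ n) (h : k * m ≤ cappedSum x m) :
    HasChain n k x m := by
  induction m generalizing x with
  | zero => exact hasChain_zero n k x
  | succ m ih =>
    obtain ⟨S, rfl, hS⟩ := exists_isTopSet_card_eq x (hk.trans_eq (Fintype.card_fin n).symm)
    have hpos : ∀ i ∈ S, 0 < x i := hS.pos_of_card_mul_le_cappedSum m.succ_pos h
    exact hasChain_succ_iff.2
      ⟨slowMove S x, exactMove_slowMove hpos, ih (hS.card_mul_le_cappedSum_slowMove hpos h)⟩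

theorem IsTopSet.hasChain_succ_iff_slowMove (hS : IsTopSet x S) (hpos : ∀ i ∈ S, 0 < x i) :
    HasChain n S.card x (m + 1) ↔ HasChain n S.card (slowMove S x) m := by
  refine ⟨fun h => ?_, fun h => hasChain_succ_iff.2 ⟨_, exactMove_slowMove hpos, h⟩⟩
  exact hasChain_of_mul_le_cappedSum (card_finset_fin_le S)
    (hS.card_mul_le_cappedSum_slowMove hpos h.mul_le_cappedSum)

theorem HasChain.le_sum (hk : 1 ≤ k) (h : HasChain n k x m) : m ≤ ∑ i, x i :=
  calc m ≤ k * m := Nat.le_mul_of_pos_left m hk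
    _ ≤ cappedSum x m := h.mul_le_cappedSum
    _ ≤ ∑ i, x i := cappedSum_le_sum x m

theorem isGreatest_tetris (hk : 1 ≤ k) (x : Fin n → ℕ) :
    IsGreatest {m | HasChain n k x m} (tetris n k x) := by
  have hbdd : BddAbove {m | HasChain n k x m} := ⟨∑ i, x i, fun _ h => h.le_sum hk⟩
  exact ⟨Nat.sSup_mem ⟨0, hasChain_zero n k x⟩ hbdd, fun _ h => le_csSup hbdd h⟩

theorem tetris_slow_move_general (hk : 1 ≤ k) (hcard : S.card = k) (hS : IsTopSet x S)
    (hpos : ∀ i ∈ S, 0 < x i) : tetris n k x = tetris n k (slowMove S x) + 1 := by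
  subst hcard
  refine (isGreatest_tetris hk x).unique ⟨?_, fun m hm => ?_⟩
  · exact (hS.hasChain_succ_iff_slowMove hpos).2 (isGreatest_tetris hk (slowMove S x)).1
  · cases m with
    | zero => exact Nat.zero_le _
    | succ m =>
      have hm' : HasChain n S.card (slowMove S x) m := (hS.hasChain_succ_iff_slowMove hpos).1 hm
      exact Nat.succ_le_succ ((isGreatest_tetris hk (slowMove S x)).2 hm')

end Chains

/-- The slow move reducing the `k` largest piles (each nonempty) by one decreases
the Tetris value by exactly one. -/
theorem tetris_slow_move (n k : ℕ) (hk1 : 1 ≤ k) (hkn : k ≤ n)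
    (x : Fin n → ℕ) (hmono : Monotone x)
    (hpos : 1 ≤ x ⟨n - k, by omega⟩)
    (x' : Fin n → ℕ)
    (hx' : x' = fun i : Fin n => if (i : ℕ) < n - k then x i else x i - 1) :
    tetris n k x' = tetris n k x - 1 := by
  have hcard : (Finset.Ici (⟨n - k, by omega⟩ : Fin n)).card = k := by
    rw [Fin.card_Ici, Nat.sub_sub_self hkn]
  rw [hx', tetris_slow_move_general hk1 hcard (isTopSet_Ici_of_monotone hmono _) fun i hi =>
    hpos.trans (hmono (Finset.mem_Ici.1 hi)), slowMove_Ici, Nat.add_sub_cancel]
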